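/- Suppose |a_0| ≤ 4√2 - 5. Then for every z ∈ 𝔻 with |z| = r ≤ 1/3: ∑_{n=0}^∞ |a_n| r^n + (1/(1+|a_0|) + r/(1-r)) · ∑_{n=1}^∞ |a_n|² r^{2n} + |f(z) - a_0|² ≤ 1. -/

import Mathlib

noncomputable def EE (m : ℤ) (t : ℝ) : ℂ := Complex.exp ((m * Complex.I) * t)

lemma EE_cont (m : ℤ) : Continuous (EE m) := by unfold EE; fun_prop

lemma EE_add (m n : ℤ) (t : ℝ) : EE m t * EE n t = EE (m + n) t := by
  unfold EE; rw [← Complex.exp_add]; congr 1; push_cast; ring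

lemma EE_norm (m : ℤ) (t : ℝ) : ‖EE m t‖ = 1 := by
  unfold EE
  have : ((m * Complex.I) * t : ℂ) = ((m * t : ℝ) : ℂ) * Complex.I := by push_cast; ring
  rw [this, Complex.norm_exp_ofReal_mul_I]

lemma EE_conj (m : ℤ) (t : ℝ) : (starRingEnd ℂ) (EE m t) = EE (-m) t := by
  unfold EE; rw [← Complex.exp_conj]; congr 1; simp

lemma EE_int (m : ℤ) : ∫ t in (0:ℝ)..(2 * Real.pi), EE m t = if m = 0 then (2 * Real.pi : ℂ) else 0 := by
  split_ifs with h
  · subst h; simp [EE]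
  · unfold EE
    have hc : (m * Complex.I : ℂ) ≠ 0 := by simp [h]
    rw [integral_exp_mul_complex hc]
    have : (m * Complex.I * ((2 * Real.pi : ℝ) : ℂ)) = m * (2 * Real.pi * Complex.I) := by push_cast; ring
    rw [this, Complex.exp_int_mul_two_pi_mul_I]; simp

lemma sq_int {ι : Type*} [Fintype ι] (e : ι → ℤ) (he : Function.Injective e) (u : ι → ℂ) :
    ∫ t in (0:ℝ)..(2 * Real.pi), ‖∑ j, u j * EE (e j) t‖ ^ 2 = 2 * Real.pi * ∑ j, ‖u j‖ ^ 2 := by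
  classical
  have key : ∀ t : ℝ, ((‖∑ j, u j * EE (e j) t‖ ^ 2 : ℝ) : ℂ)
      = ∑ i, ∑ j, u i * (starRingEnd ℂ) (u j) * EE (e i - e j) t := by
    intro t
    push_cast
    rw [← Complex.mul_conj', map_sum, Finset.sum_mul_sum]
    refine Finset.sum_congr rfl fun i _ => Finset.sum_congr rfl fun j _ => ?_
    rw [map_mul, EE_conj, sub_eq_add_neg, ← EE_add]; ring
  apply Complex.ofReal_injective
  rw [← intervalIntegral.integral_ofReal]
  simp_rw [key]
  rw [intervalIntegral.integral_finsetSum]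
  · have : ∀ i, ∫ t in (0:ℝ)..(2 * Real.pi), ∑ j, u i * (starRingEnd ℂ) (u j) * EE (e i - e j) t
        = 2 * Real.pi * (‖u i‖:ℂ) ^ 2 := by
      intro i
      rw [intervalIntegral.integral_finsetSum]
      · simp_rw [intervalIntegral.integral_const_mul, EE_int, sub_eq_zero, he.eq_iff]
        simp only [mul_ite, mul_zero, Finset.sum_ite_eq, Finset.mem_univ, if_true]
        rw [Complex.mul_conj']; ring
      · intro j _
        exact (continuous_const.mul (EE_cont _)).intervalIntegrable _ _
    simp_rw [this]
    push_cast
    rw [Finset.mul_sum]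
  · intro i _
    exact (continuous_finsetSum _ fun j _ => (continuous_const.mul (EE_cont _))).intervalIntegrable _ _

lemma coef_int (f : ℂ → ℂ) (a : ℕ → ℂ)
    (hs : ∀ z ∈ Metric.ball (0 : ℂ) 1, HasSum (fun n => a n * z ^ n) (f z))
    (ρ : ℝ) (h0 : 0 ≤ ρ) (h1 : ρ < 1) (m : ℤ) :
    ∫ t in (0:ℝ)..(2 * Real.pi), f (ρ * EE 1 t) * EE (-m) t =
      2 * Real.pi * (if 0 ≤ m then a m.toNat * ρ ^ m.toNat else 0) := by
  have hsum : Summable fun n => ‖a n‖ * ρ ^ n := by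
    have := (hs ρ (by simp [abs_of_nonneg h0, h1])).summable.norm
    simpa [abs_of_nonneg h0] using this
  have hpow : ∀ (n : ℕ) t, EE 1 t ^ n = EE n t := by
    intro n t
    induction n with
    | zero => simp [EE]
    | succ k ih => rw [pow_succ, ih, EE_add]; push_cast; rfl
  have hF : ∀ t : ℝ, HasSum (fun n : ℕ => a n * ρ ^ n * EE (n - m) t) (f (ρ * EE 1 t) * EE (-m) t) := by
    intro t
    have := (hs (ρ * EE 1 t) (by simp [EE_norm, abs_of_nonneg h0, h1])).mul_right (EE (-m) t)
    have h2 : (fun n : ℕ => a n * ρ ^ n * EE (n - m) t)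
        = fun n : ℕ => a n * (ρ * EE 1 t) ^ n * EE (-m) t := by
      funext n
      rw [mul_pow, hpow, sub_eq_add_neg, ← EE_add]; ring
    rw [h2]; exact this
  have H := intervalIntegral.hasSum_integral_of_dominated_convergence (μ := MeasureTheory.volume)
    (a := 0) (b := 2 * Real.pi)
    (F := fun (n : ℕ) t => a n * ρ ^ n * EE (n - m) t) (f := fun t => f (ρ * EE 1 t) * EE (-m) t)
    (fun n _ => ‖a n‖ * ρ ^ n)
    (fun n => (continuous_const.mul (EE_cont _)).aestronglyMeasurable)
    (fun n => Filter.Eventually.of_forall fun t _ => by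
      simp [EE_norm, abs_of_nonneg h0])
    (Filter.Eventually.of_forall fun t _ => hsum)
    (by simp)
    (Filter.Eventually.of_forall fun t _ => hF t)
  refine H.unique ?_
  simp_rw [intervalIntegral.integral_const_mul, EE_int]
  split_ifs with hm
  · convert hasSum_single m.toNat ?_ using 1
    · have : (m.toNat : ℤ) - m = 0 := by omega
      simp only [this, if_true]; ring
    · intro n hn
      rw [if_neg (by omega), mul_zero]
  · convert hasSum_zero using 2 with n
    · rw [if_neg (by omega), mul_zero]
    · simp

lemma toep_rho (f : ℂ → ℂ) (a : ℕ → ℂ)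
    (hf : DifferentiableOn ℂ f (Metric.ball 0 1))
    (hb : ∀ z ∈ Metric.ball (0 : ℂ) 1, ‖f z‖ ≤ 1)
    (hs : ∀ z ∈ Metric.ball (0 : ℂ) 1, HasSum (fun n => a n * z ^ n) (f z))
    (ρ : ℝ) (h0 : 0 ≤ ρ) (h1 : ρ < 1) 
    {ι κ : Type*} [Fintype ι] [Fintype κ] (e : ι → ℕ) (he : Function.Injective e)
    (e' : κ → ℕ) (he' : Function.Injective e') (u : ι → ℂ) (v : κ → ℂ) :
    (∑ i, ∑ j, v i * u j * (if e j ≤ e' i then a (e' i - e j) * ρ ^ (e' i - e j) else 0)).re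
      ≤ (∑ j, ‖u j‖ ^ 2 + ∑ i, ‖v i‖ ^ 2) / 2 := by
  have hmem : ∀ t, (ρ * EE 1 t : ℂ) ∈ Metric.ball (0:ℂ) 1 := fun t => by
    simp [EE_norm, abs_of_nonneg h0, h1]
  have hfc : Continuous fun t => f (ρ * EE 1 t) :=
    hf.continuousOn.comp_continuous (continuous_const.mul (EE_cont 1)) hmem
  set p : ℝ → ℂ := fun t => ∑ j, u j * EE ((e j : ℤ)) t with hp
  set q : ℝ → ℂ := fun t => ∑ i, v i * EE (-(e' i : ℤ)) t with hq
  have hpc : Continuous p := continuous_finsetSum _ fun j _ => (continuous_const.mul (EE_cont _))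
  have hqc : Continuous q := continuous_finsetSum _ fun j _ => (continuous_const.mul (EE_cont _))
  have hp2 : ∫ t in (0:ℝ)..(2 * Real.pi), ‖p t‖ ^ 2 = 2 * Real.pi * ∑ j, ‖u j‖ ^ 2 :=
    sq_int (fun j => (e j : ℤ)) (fun x y h => he (by simpa using h)) u
  have hq2 : ∫ t in (0:ℝ)..(2 * Real.pi), ‖q t‖ ^ 2 = 2 * Real.pi * ∑ i, ‖v i‖ ^ 2 :=
    sq_int (fun i => -(e' i : ℤ)) (fun x y h => he' (by simpa using h)) v
  have hprod : ∀ t, f (ρ * EE 1 t) * (p t * q t) =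
      ∑ i, ∑ j, v i * u j * (f (ρ * EE 1 t) * EE (-((e' i : ℤ) - e j)) t) := by
    intro t
    rw [mul_comm (p t), hp, hq]
    simp only
    rw [Finset.sum_mul_sum, Finset.mul_sum]
    refine Finset.sum_congr rfl fun i _ => ?_
    rw [Finset.mul_sum]
    refine Finset.sum_congr rfl fun j _ => ?_
    rw [show -((e' i : ℤ) - e j) = -(e' i : ℤ) + e j by ring, ← EE_add]; ring
  have hI : ∫ t in (0:ℝ)..(2 * Real.pi), f (ρ * EE 1 t) * (p t * q t) =
      ((2 * Real.pi : ℝ) : ℂ) * ∑ i, ∑ j, v i * u j * (if e j ≤ e' i then a (e' i - e j) * ρ ^ (e' i - e j) else 0) := by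
    simp_rw [hprod]
    rw [intervalIntegral.integral_finsetSum, Finset.mul_sum]
    · refine Finset.sum_congr rfl fun i _ => ?_
      rw [intervalIntegral.integral_finsetSum, Finset.mul_sum]
      · refine Finset.sum_congr rfl fun j _ => ?_
        rw [intervalIntegral.integral_const_mul, coef_int f a hs ρ h0 h1]
        have h3 : ((e' i : ℤ) - e j).toNat = e' i - e j := by omega
        have h4 : (0 ≤ (e' i : ℤ) - e j) ↔ e j ≤ e' i := by omega
        simp only [h3, h4]
        push_cast
        ring
      · intro j _
        exact (continuous_const.mul (hfc.mul (EE_cont _))).intervalIntegrable _ _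
    · intro i _
      exact (continuous_finsetSum _ fun j _ => continuous_const.mul (hfc.mul (EE_cont _))).intervalIntegrable _ _
  have hre : ∫ t in (0:ℝ)..(2 * Real.pi), (f (ρ * EE 1 t) * (p t * q t)).re
     = (∫ t in (0:ℝ)..(2 * Real.pi), f (ρ * EE 1 t) * (p t * q t)).re := by
    have := Complex.reCLM.intervalIntegral_comp_comm (μ := MeasureTheory.volume) (a := 0) (b := 2 * Real.pi)
      (f := fun t => f (ρ * EE 1 t) * (p t * q t)) ((hfc.mul (hpc.mul hqc)).intervalIntegrable _ _)
    simpa using this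
  have hle : ∫ t in (0:ℝ)..(2 * Real.pi), (f (ρ * EE 1 t) * (p t * q t)).re
     ≤ ∫ t in (0:ℝ)..(2 * Real.pi), (‖p t‖ ^ 2 + ‖q t‖ ^ 2) / 2 := by
    apply intervalIntegral.integral_mono_on (by positivity)
    · exact (Complex.continuous_re.comp (hfc.mul (hpc.mul hqc))).intervalIntegrable _ _
    · exact (((hpc.norm.pow 2).add (hqc.norm.pow 2)).div_const 2).intervalIntegrable _ _
    · intro t _
      refine (Complex.re_le_norm _).trans ?_
      rw [norm_mul, norm_mul]
      have h5 := hb _ (hmem t)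
      have : ‖f (ρ * EE 1 t)‖ * (‖p t‖ * ‖q t‖) ≤ 1 * (‖p t‖ * ‖q t‖) := by gcongr
      nlinarith [sq_nonneg (‖p t‖ - ‖q t‖)]
  have hp3 : Continuous fun t => ‖p t‖ ^ 2 := hpc.norm.pow 2
  have hq3 : Continuous fun t => ‖q t‖ ^ 2 := hqc.norm.pow 2
  rw [hre, hI, intervalIntegral.integral_div, intervalIntegral.integral_add
    (hp3.intervalIntegrable _ _) (hq3.intervalIntegrable _ _), hp2, hq2,
    Complex.re_ofReal_mul] at hle
  have hpi := Real.pi_pos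
  refine le_of_mul_le_mul_left (hle.trans_eq ?_) (by positivity : 0 < 2 * Real.pi)
  ring

lemma toep (f : ℂ → ℂ) (a : ℕ → ℂ)
    (hf : DifferentiableOn ℂ f (Metric.ball 0 1))
    (hb : ∀ z ∈ Metric.ball (0 : ℂ) 1, ‖f z‖ ≤ 1)
    (hs : ∀ z ∈ Metric.ball (0 : ℂ) 1, HasSum (fun n => a n * z ^ n) (f z))
    {ι κ : Type*} [Fintype ι] [Fintype κ] (e : ι → ℕ) (he : Function.Injective e)
    (e' : κ → ℕ) (he' : Function.Injective e') (u : ι → ℂ) (v : κ → ℂ) :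
    (∑ i, ∑ j, v i * u j * (if e j ≤ e' i then a (e' i - e j) else 0)).re
      ≤ (∑ j, ‖u j‖ ^ 2 + ∑ i, ‖v i‖ ^ 2) / 2 := by
  set G : ℝ → ℝ := fun ρ => (∑ i, ∑ j, v i * u j *
    (if e j ≤ e' i then a (e' i - e j) * (ρ:ℂ) ^ (e' i - e j) else 0)).re with hG
  have hc : Continuous G := by
    refine Complex.continuous_re.comp ?_
    refine continuous_finsetSum _ fun i _ => continuous_finsetSum _ fun j _ => ?_
    split_ifs <;> fun_prop
  have h1 : G 1 = (∑ i, ∑ j, v i * u j * (if e j ≤ e' i then a (e' i - e j) else 0)).re := by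
    simp [hG]
  rw [← h1]
  have ht : Filter.Tendsto G (nhdsWithin 1 (Set.Iio 1)) (nhds (G 1)) :=
    (hc.tendsto 1).mono_left nhdsWithin_le_nhds
  refine le_of_tendsto ht ?_
  filter_upwards [Ioo_mem_nhdsLT (show (0:ℝ) < 1 by norm_num)] with ρ hρ
  exact toep_rho f a hf hb hs ρ hρ.1.le hρ.2 e he e' he' u v

lemma phase (w : ℂ) : ∃ ω : ℂ, ‖ω‖ = 1 ∧ ω * w = ‖w‖ := by
  by_cases h : w = 0
  · exact ⟨1, by simp, by simp [h]⟩
  · have h' : ‖w‖ ≠ 0 := by simpa using h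
    refine ⟨(starRingEnd ℂ) w / ‖w‖, by simp [h'], ?_⟩
    rw [div_mul_eq_mul_div, Complex.conj_mul']
    have : (‖w‖ : ℂ) ≠ 0 := by exact_mod_cast h'
    field_simp

lemma odd_coef (f : ℂ → ℂ) (a : ℕ → ℂ)
    (hf : DifferentiableOn ℂ f (Metric.ball 0 1))
    (hb : ∀ z ∈ Metric.ball (0 : ℂ) 1, ‖f z‖ ≤ 1)
    (hs : ∀ z ∈ Metric.ball (0 : ℂ) 1, HasSum (fun n => a n * z ^ n) (f z)) (n : ℕ) :
    ‖a (2 * n + 1)‖ ≤ 1 - ∑ k ∈ Finset.range (n + 1), ‖a k‖ ^ 2 := by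
  obtain ⟨ω, hω, hω'⟩ := phase (a (2 * n + 1))
  have hωω : ω * (starRingEnd ℂ) ω = 1 := by rw [Complex.mul_conj', hω]; simp
  have H := toep f a hf hb hs (ι := Fin (n + 1) ⊕ Unit) (κ := Fin (n + 1) ⊕ Unit)
    (Sum.elim (fun k => 2 * n + 1 - k) (fun _ => 0)) (by
      rintro (x | x) (y | y) h <;> simp at h ⊢ <;> omega)
    (Sum.elim (fun k => k) (fun _ => 2 * n + 1)) (by
      rintro (x | x) (y | y) h <;> simp at h ⊢ <;> omega)
    (Sum.elim (fun k => (starRingEnd ℂ) ω * (starRingEnd ℂ) (a k)) (fun _ => 1))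
    (Sum.elim (fun k => (starRingEnd ℂ) (a k)) (fun _ => ω))
  have c1 : ∀ k l : Fin (n+1), ¬ (2 * n + 1 - (l:ℕ) ≤ k) := by intro k l; omega
  have c2 : ∀ l : Fin (n+1), 2 * n + 1 - (2 * n + 1 - (l:ℕ)) = l := by intro l; omega
  have c3 : ∀ l : Fin (n+1), ω * ((starRingEnd ℂ) ω * (starRingEnd ℂ) (a l)) * a l = ((‖a l‖ ^ 2 : ℝ) : ℂ) := by
    intro l
    rw [← mul_assoc, hωω, one_mul, Complex.conj_mul']; push_cast; rfl
  have c10 : ∀ l : Fin (n+1), 2 * n + 1 - (l:ℕ) ≤ 2 * n + 1 := by intro l; omega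
  simp only [Fintype.sum_sum_type, Sum.elim_inl, Sum.elim_inr, Finset.univ_unique, Finset.sum_singleton,
    c1, if_false, c2, c3, c10, zero_le, if_true, mul_zero, Finset.sum_const_zero, zero_add, tsub_zero,
    mul_one, hω', Complex.conj_mul', norm_mul, Complex.norm_conj, hω, one_mul, norm_one] at H
  have e2 : (∑ l : Fin (n+1), ((‖a l‖ ^ 2 : ℝ) : ℂ)) = ((∑ k ∈ Finset.range (n+1), ‖a k‖ ^ 2 : ℝ) : ℂ) := by
    rw [← Fin.sum_univ_eq_sum_range (fun k => ‖a k‖ ^ 2)]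
    push_cast; rfl
  have e3 : (∑ l : Fin (n+1), (‖a l‖ : ℂ) ^ 2) = ((∑ k ∈ Finset.range (n+1), ‖a k‖ ^ 2 : ℝ) : ℂ) := by
    rw [← e2]; push_cast; rfl
  rw [Fin.sum_univ_eq_sum_range (fun k => ‖a k‖ ^ 2)] at H
  simp only [e2, e3, Complex.add_re, Complex.ofReal_re] at H
  linarith

lemma even_coef (f : ℂ → ℂ) (a : ℕ → ℂ)
    (hf : DifferentiableOn ℂ f (Metric.ball 0 1))
    (hb : ∀ z ∈ Metric.ball (0 : ℂ) 1, ‖f z‖ ≤ 1)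
    (hs : ∀ z ∈ Metric.ball (0 : ℂ) 1, HasSum (fun n => a n * z ^ n) (f z)) (n : ℕ) (hn : 1 ≤ n) :
    ‖a (2 * n)‖ ≤ 1 - ∑ k ∈ Finset.range n, ‖a k‖ ^ 2 - ‖a n‖ ^ 2 / (1 + ‖a 0‖) := by
  obtain ⟨ω, hω, hω'⟩ := phase (a (2 * n))
  have hωω : ω * (starRingEnd ℂ) ω = 1 := by rw [Complex.mul_conj', hω]; simp
  set s : ℝ := 1 / (1 + ‖a 0‖) with hsd
  have h10 : 0 < 1 + ‖a 0‖ := by positivity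
  have hs0 : 0 < s := by positivity
  have H := toep f a hf hb hs (ι := Fin n ⊕ Unit ⊕ Unit) (κ := Fin n ⊕ Unit ⊕ Unit)
    (Sum.elim (fun k => 2 * n - k) (Sum.elim (fun _ => n) (fun _ => 0))) (by
      rintro (x | x | x) (y | y | y) h <;> simp at h ⊢ <;> omega)
    (Sum.elim (fun k => k) (Sum.elim (fun _ => n) (fun _ => 2 * n))) (by
      rintro (x | x | x) (y | y | y) h <;> simp at h ⊢ <;> omega)
    (Sum.elim (fun k => (starRingEnd ℂ) ω * (starRingEnd ℂ) (a k))
      (Sum.elim (fun _ => s * ((starRingEnd ℂ) ω * (starRingEnd ℂ) (a n))) (fun _ => 1)))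
    (Sum.elim (fun k => (starRingEnd ℂ) (a k)) (Sum.elim (fun _ => s * (starRingEnd ℂ) (a n)) (fun _ => ω)))
  have c1 : ∀ k l : Fin n, ¬ (2 * n - (l:ℕ) ≤ k) := by intro k l; omega
  have c2 : ∀ l : Fin n, 2 * n - (2 * n - (l:ℕ)) = l := by intro l; omega
  have c3 : ∀ l : ℕ, ω * ((starRingEnd ℂ) ω * (starRingEnd ℂ) (a l)) * a l = ((‖a l‖ ^ 2 : ℝ) : ℂ) := by
    intro l
    rw [← mul_assoc, hωω, one_mul, Complex.conj_mul']; push_cast; rfl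
  have c4 : ∀ l : Fin n, ¬ (2 * n - (l:ℕ) ≤ n) := by intro l; omega
  have c5 : ∀ l : Fin n, ¬ (n ≤ (l : ℕ)) := by intro l; omega
  have c6 : n ≤ 2 * n := by omega
  have c7 : 2 * n - n = n := by omega
  have c8 : ω * (s * ((starRingEnd ℂ) ω * (starRingEnd ℂ) (a n))) * a n = ((s * ‖a n‖ ^ 2 : ℝ) : ℂ) := by
    have := c3 n
    push_cast at this ⊢
    rw [← this]; ring
  have c9 : s * (starRingEnd ℂ) (a n) * a n = ((s * ‖a n‖ ^ 2 : ℝ) : ℂ) := by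
    rw [mul_assoc, Complex.conj_mul']; push_cast; rfl
  have c10 : ∀ l : Fin n, 2 * n - (l:ℕ) ≤ 2 * n := by intro l; omega
  simp only [Fintype.sum_sum_type, Sum.elim_inl, Sum.elim_inr, Finset.univ_unique, Finset.sum_singleton,
    c1, if_false, c2, c3, c4, c5, c6, c7, c8, c9, c10, zero_le, le_refl, if_true, mul_zero, Finset.sum_const_zero, zero_add, tsub_zero, tsub_self,
    mul_one, hω', Complex.conj_mul', norm_mul, Complex.norm_conj, hω, one_mul, norm_one] at H
  set X : ℂ := s * (starRingEnd ℂ) (a n) * (s * ((starRingEnd ℂ) ω * (starRingEnd ℂ) (a n))) * a 0 with hX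
  have hXn : -(s ^ 2 * ‖a n‖ ^ 2 * ‖a 0‖) ≤ X.re := by
    have h1 := (abs_le.1 (Complex.abs_re_le_norm X)).1
    have h2 : ‖X‖ = s ^ 2 * ‖a n‖ ^ 2 * ‖a 0‖ := by
      rw [hX]; simp only [norm_mul, Complex.norm_conj, hω, Complex.norm_real, Real.norm_eq_abs, abs_of_pos hs0]; ring
    rw [h2] at h1; exact h1
  rw [Fin.sum_univ_eq_sum_range (fun k => ‖a k‖ ^ 2)] at H
  have e2 : (∑ l : Fin n, ((‖a l‖ ^ 2 : ℝ) : ℂ)) = ((∑ k ∈ Finset.range n, ‖a k‖ ^ 2 : ℝ) : ℂ) := by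
    rw [← Fin.sum_univ_eq_sum_range (fun k => ‖a k‖ ^ 2)]
    push_cast; rfl
  have e3 : (∑ l : Fin n, (‖a l‖ : ℂ) ^ 2) = ((∑ k ∈ Finset.range n, ‖a k‖ ^ 2 : ℝ) : ℂ) := by
    rw [← e2]; push_cast; rfl
  simp only [e2, e3, Complex.add_re, Complex.ofReal_re, Complex.norm_real, Real.norm_eq_abs, abs_of_pos hs0] at H
  have hs1 : s * (1 + ‖a 0‖) = 1 := by rw [hsd]; field_simp
  have : ‖a n‖ ^ 2 / (1 + ‖a 0‖) = s * ‖a n‖ ^ 2 := by rw [hsd]; ring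
  rw [this]
  have h8 : s ^ 2 * ‖a n‖ ^ 2 * ‖a 0‖ + s ^ 2 * ‖a n‖ ^ 2 = s * ‖a n‖ ^ 2 := by
    linear_combination s * ‖a n‖ ^ 2 * hs1
  nlinarith [H, h8, hXn]

lemma partial_bound (b : ℕ → ℝ) (hb0 : ∀ n, 0 ≤ b n)
    (hodd : ∀ n, b (2 * n + 1) ≤ 1 - ∑ k ∈ Finset.range (n + 1), b k ^ 2)
    (heven : ∀ n, 1 ≤ n → b (2 * n) ≤ 1 - ∑ k ∈ Finset.range n, b k ^ 2 - b n ^ 2 / (1 + b 0))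
    (r : ℝ) (h0 : 0 ≤ r) (h1 : r < 1) (N : ℕ) :
    ∑ i ∈ Finset.range (2 * N), b (i + 1) * r ^ (i + 1)
      + (1 / (1 + b 0) + r / (1 - r)) * ∑ k ∈ Finset.range N, b (k + 1) ^ 2 * r ^ (2 * (k + 1))
      ≤ r / (1 - r) * ((1 - b 0 ^ 2) - r ^ (2 * N) * (1 - ∑ k ∈ Finset.range (N + 1), b k ^ 2)) := by
  have hr : 0 < 1 - r := by linarith
  induction N with
  | zero => simp
  | succ N ih =>
    have o := mul_le_mul_of_nonneg_right (hodd N) (pow_nonneg h0 (2 * N + 1))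
    have e := mul_le_mul_of_nonneg_right (heven (N + 1) (by omega)) (pow_nonneg h0 (2 * N + 2))
    rw [show 2 * (N + 1) = 2 * N + 1 + 1 by ring] at *
    rw [Finset.sum_range_succ _ (2 * N + 1), Finset.sum_range_succ _ (2 * N),
      Finset.sum_range_succ _ N, Finset.sum_range_succ _ (N + 1)]
    rw [show 2 * (N + 1) = 2 * N + 1 + 1 by ring] at *
    set S := ∑ k ∈ Finset.range (N + 1), b k ^ 2
    set U := ∑ i ∈ Finset.range (2 * N), b (i + 1) * r ^ (i + 1)
    set V := ∑ k ∈ Finset.range N, b (k + 1) ^ 2 * r ^ (2 * (k + 1))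
    have id : r / (1 - r) * ((1 - b 0 ^ 2) - r ^ (2 * N + 1 + 1) * (1 - (S + b (N + 1) ^ 2)))
       = r / (1 - r) * ((1 - b 0 ^ 2) - r ^ (2 * N) * (1 - S)) + r ^ (2 * N + 1) * (1 + r) * (1 - S)
        + r / (1 - r) * (b (N + 1) ^ 2 * r ^ (2 * N + 2)) := by
      field_simp
      ring
    rw [id]
    have id2 : b (N + 1) ^ 2 / (1 + b 0) * r ^ (2 * N + 2)
        = 1 / (1 + b 0) * (b (N + 1) ^ 2 * r ^ (2 * N + 2)) := by ring
    have id3 : r ^ (2 * N + 1) * (1 + r) * (1 - S)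
        = (1 - S) * r ^ (2 * N + 1) + (1 - S) * r ^ (2 * N + 2) := by ring
    rw [id3]
    simp only [sub_mul (1 - S), id2] at e
    simp only [mul_add, add_mul] at *
    linarith

lemma schwarz_pick0 (f : ℂ → ℂ)
    (hf : DifferentiableOn ℂ f (Metric.ball 0 1))
    (hb : ∀ z ∈ Metric.ball (0 : ℂ) 1, ‖f z‖ ≤ 1) (h0 : ‖f 0‖ < 1)
    (z : ℂ) (hz : z ∈ Metric.ball (0 : ℂ) 1) :
    ‖f z - f 0‖ * (1 - ‖f 0‖ * ‖z‖) ≤ ‖z‖ * (1 - ‖f 0‖ ^ 2) := by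
  set c := f 0 with hc
  have hne : ∀ w ∈ Metric.ball (0 : ℂ) 1, 1 - (starRingEnd ℂ) c * f w ≠ 0 := by
    intro w hw h
    have h1 : ‖(starRingEnd ℂ) c * f w‖ = 1 := by rw [← sub_eq_zero.1 h]; simp
    rw [norm_mul, Complex.norm_conj] at h1
    have := hb w hw
    nlinarith [norm_nonneg c, norm_nonneg (f w)]
  have hle : ∀ w ∈ Metric.ball (0 : ℂ) 1, ‖f w - c‖ ≤ ‖1 - (starRingEnd ℂ) c * f w‖ := by
    intro w hw
    have h1 := hb w hw
    have h2 : ‖1 - (starRingEnd ℂ) c * f w‖ ^ 2 - ‖f w - c‖ ^ 2 = (1 - ‖c‖ ^ 2) * (1 - ‖f w‖ ^ 2) := by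
      simp only [← Complex.normSq_eq_norm_sq, Complex.normSq_apply]
      simp
      ring
    have h3 : 0 ≤ (1 - ‖c‖ ^ 2) * (1 - ‖f w‖ ^ 2) :=
      mul_nonneg (by nlinarith [norm_nonneg c]) (by nlinarith [norm_nonneg (f w)])
    exact le_of_sq_le_sq (by linarith) (norm_nonneg _)
  set g : ℂ → ℂ := fun w => (f w - c) / (1 - (starRingEnd ℂ) c * f w) with hg
  have hgd : DifferentiableOn ℂ g (Metric.ball 0 1) :=
    (hf.sub_const c).div ((differentiableOn_const _).sub (hf.const_mul _)) hne
  have hgz : ‖g z‖ ≤ ‖z‖ := by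
    apply Complex.norm_le_norm_of_mapsTo_ball hgd _ (by simp [hg, hc]) (by simpa using hz)
    intro w hw
    simp only [hg, Metric.mem_closedBall, dist_zero_right, norm_div]
    exact div_le_one_of_le₀ (hle w hw) (norm_nonneg _)
  have hfz : f z - c = g z * ((1 - ‖c‖ ^ 2 : ℝ) - (starRingEnd ℂ) c * (f z - c)) := by
    have h4 : ((1 - ‖c‖ ^ 2 : ℝ) : ℂ) - (starRingEnd ℂ) c * (f z - c) = 1 - (starRingEnd ℂ) c * f z := by
      push_cast
      rw [← Complex.conj_mul']; ring
    rw [h4, hg]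
    simp only
    rw [div_mul_cancel₀ _ (hne z hz)]
  have h5 : ‖f z - c‖ ≤ ‖z‖ * ((1 - ‖c‖ ^ 2) + ‖c‖ * ‖f z - c‖) := by
    calc ‖f z - c‖ = ‖g z‖ * ‖((1 - ‖c‖ ^ 2 : ℝ) : ℂ) - (starRingEnd ℂ) c * (f z - c)‖ := by
          rw [← norm_mul, ← hfz]
      _ ≤ ‖z‖ * ((1 - ‖c‖ ^ 2) + ‖c‖ * ‖f z - c‖) := by
          gcongr
          refine (norm_sub_le _ _).trans ?_
          rw [norm_mul, Complex.norm_conj, Complex.norm_real, Real.norm_eq_abs,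
            abs_of_nonneg (by nlinarith [norm_nonneg c])]
  linarith

/-- Theorem 5 (sufficiency): for a bounded analytic self-map `f` of the unit
disk with `|a₀| ≤ 4√2 - 5`, and every `z` with `|z| = r ≤ 1/3`:
`∑_{n=0}^∞ |aₙ| rⁿ + (1/(1+|a₀|) + r/(1-r)) ∑_{n=1}^∞ |aₙ|² r^{2n}
  + |f(z) - a₀|² ≤ 1`. -/
theorem stmt16 (f : ℂ → ℂ) (a : ℕ → ℂ)
    (hf : DifferentiableOn ℂ f (Metric.ball 0 1))
    (hb : ∀ z ∈ Metric.ball (0 : ℂ) 1, ‖f z‖ ≤ 1)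
    (hs : ∀ z ∈ Metric.ball (0 : ℂ) 1, HasSum (fun n => a n * z ^ n) (f z))
    (ha0 : ‖a 0‖ ≤ 4 * Real.sqrt 2 - 5)
    (z : ℂ) (hz : z ∈ Metric.ball (0 : ℂ) 1) (r : ℝ) (hzr : ‖z‖ = r) (hr : r ≤ 1 / 3) :
    (∑' n : ℕ, ‖a n‖ * r ^ n)
      + (1 / (1 + ‖a 0‖) + r / (1 - r)) * ∑' n : ℕ, ‖a (n + 1)‖ ^ 2 * r ^ (2 * (n + 1))
      + ‖f z - a 0‖ ^ 2
      ≤ 1 := by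
  
  have hr0 : 0 ≤ r := hzr ▸ norm_nonneg z
  have hr1 : r < 1 := by linarith
  have hA0 : 0 ≤ ‖a 0‖ := norm_nonneg _
  have hs2 : Real.sqrt 2 ^ 2 = 2 := Real.sq_sqrt (by norm_num)
  have hs2' : 0 ≤ Real.sqrt 2 := Real.sqrt_nonneg 2
  have hs2l : Real.sqrt 2 < 1.415 := by nlinarith
  have hs2g : 1.4 < Real.sqrt 2 := by nlinarith
  have hA1 : ‖a 0‖ < 1 := by linarith
  have hf0 : f 0 = a 0 := by
    refine (hs 0 (by simp)).unique ?_
    convert hasSum_single 0 ?_ using 1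
    · simp
    · intro n hn; simp [hn]
  have hodd := odd_coef f a hf hb hs
  have heven := even_coef f a hf hb hs
  have hb1 : ∀ n, ‖a n‖ ≤ 1 := by
    intro n
    have h1 := hodd n
    have h2 : ‖a n‖ ^ 2 ≤ ∑ k ∈ Finset.range (n + 1), ‖a k‖ ^ 2 :=
      Finset.single_le_sum (f := fun k => ‖a k‖ ^ 2) (fun _ _ => by positivity) (by simp)
    nlinarith [norm_nonneg (a (2 * n + 1)), norm_nonneg (a n)]
  have hsum : Summable fun n => ‖a n‖ * r ^ n := by
    have := (hs z hz).summable.norm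
    simpa [hzr] using this
  have hsum1 : Summable fun n => ‖a (n + 1)‖ * r ^ (n + 1) :=
    (summable_nat_add_iff (f := fun n => ‖a n‖ * r ^ n) 1).2 hsum
  have hsum2 : Summable fun n => ‖a (n + 1)‖ ^ 2 * r ^ (2 * (n + 1)) := by
    refine Summable.of_nonneg_of_le (fun n => by positivity) (fun n => ?_) hsum1
    have h1 : ‖a (n + 1)‖ * r ^ (n + 1) ≤ 1 :=
      mul_le_one₀ (hb1 _) (by positivity) (pow_le_one₀ hr0 hr1.le)
    have h2 : 0 ≤ ‖a (n + 1)‖ * r ^ (n + 1) := by positivity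
    calc ‖a (n + 1)‖ ^ 2 * r ^ (2 * (n + 1)) = (‖a (n + 1)‖ * r ^ (n + 1)) ^ 2 := by ring
      _ ≤ _ := by nlinarith
  have hlim : (∑' n : ℕ, ‖a (n + 1)‖ * r ^ (n + 1))
      + (1 / (1 + ‖a 0‖) + r / (1 - r)) * ∑' n : ℕ, ‖a (n + 1)‖ ^ 2 * r ^ (2 * (n + 1))
      ≤ r / (1 - r) * (1 - ‖a 0‖ ^ 2) := by
    have t1 := hsum1.hasSum.tendsto_sum_nat.comp
      (Filter.tendsto_id.const_mul_atTop' (show 0 < 2 by norm_num) : Filter.Tendsto (fun N : ℕ => 2 * N) Filter.atTop Filter.atTop)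
    have t2 := hsum2.hasSum.tendsto_sum_nat.const_mul (1 / (1 + ‖a 0‖) + r / (1 - r))
    refine le_of_tendsto' (t1.add t2) fun N => ?_
    refine (partial_bound (fun n => ‖a n‖) (fun n => norm_nonneg _) hodd heven r hr0 hr1 N).trans ?_
    have h3 : 0 ≤ 1 - ∑ k ∈ Finset.range (N + 1), ‖a k‖ ^ 2 := (norm_nonneg _).trans (hodd N)
    have h4 : 0 ≤ r / (1 - r) := div_nonneg hr0 (by linarith)
    have h5 : 0 ≤ r ^ (2 * N) * (1 - ∑ k ∈ Finset.range (N + 1), ‖a k‖ ^ 2) := by positivity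
    exact mul_le_mul_of_nonneg_left (by linarith) h4
  have hsp := schwarz_pick0 f hf hb (by rw [hf0]; exact hA1) z hz
  rw [hf0, hzr] at hsp
  have hsplit := hsum.tsum_eq_zero_add
  rw [hsplit]
  simp only [pow_zero, mul_one]
  set A := ‖a 0‖
  set D := ‖f z - a 0‖
  have hD0 : 0 ≤ D := norm_nonneg _
  have hhalf : r / (1 - r) ≤ 1 / 2 := by
    rw [div_le_div_iff₀ (by linarith) (by norm_num)]; linarith
  have hA2 : 0 ≤ 1 - A ^ 2 := by nlinarith
  have h6 : r / (1 - r) * (1 - A ^ 2) ≤ 1 / 2 * (1 - A ^ 2) := mul_le_mul_of_nonneg_right hhalf hA2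
  have hD : D * (3 - A) ≤ 1 - A ^ 2 := by
    have h7 : D * (1 - A * (1 / 3)) ≤ 1 / 3 * (1 - A ^ 2) := by
      have g1 : D * (A * r) ≤ D * (A * (1 / 3)) := by gcongr
      have g2 : D * r * A ≤ D * A * r := by linarith
      have g3 : D * (1 - A * r) * (1 / 3) ≤ r * (1 - A ^ 2) * (1 / 3) := by linarith
      by_contra hcon
      push Not at hcon
      have g4 : 1 / 3 * (1 - A ^ 2) * (1 - A * r) < r * (1 - A ^ 2) * (1 - A * (1 / 3)) := by
        have g5 : 0 < 1 - A * r := by nlinarith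
        have g6 : 0 < 1 - A * (1 / 3) := by linarith
        nlinarith [mul_lt_mul_of_pos_right hcon g5, mul_le_mul_of_nonneg_right hsp g6.le]
      nlinarith
    linarith
  have hD2 : D ≤ Real.sqrt 2 / 2 * (1 - A) := by
    have g0 : Real.sqrt 2 * (1 + A) ≤ 3 - A := by nlinarith
    have g1 : D * (Real.sqrt 2 * (1 + A)) ≤ (1 - A) * (1 + A) := by
      nlinarith [mul_le_mul_of_nonneg_left g0 hD0]
    have g2 : D * Real.sqrt 2 ≤ 1 - A :=
      le_of_mul_le_mul_right (by linarith) (by linarith : 0 < 1 + A)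
    nlinarith [mul_le_mul_of_nonneg_right g2 hs2']
  have hD3 : D ^ 2 ≤ 1 / 2 * (1 - A) ^ 2 := by
    calc D ^ 2 ≤ (Real.sqrt 2 / 2 * (1 - A)) ^ 2 := by gcongr
      _ = 1 / 2 * (1 - A) ^ 2 := by rw [mul_pow, div_pow, hs2]; ring
  nlinarith [hlim, h6, hD3]
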